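/- Let ι be an index type, y : ι → ℤ a labeling by integers, ε > 0 and ε⁺ ≥ 0 real numbers. Let E be a nontrivial real inner product space (e.g. Euclidean space ℝ^D with D ≥ 1). Then there exists an embedding x : ι → E such that for all i, j: y i = y j implies ‖x i − x j‖ ≤ ε⁺ and y i ≠ y j implies ‖x i − x j‖ ≥ ((ε⁺)² + ε)^{1/2}; in particular, for every nonempty finite set T of triplets (i, j⁺, j⁻) with y i = y j⁺ and y i ≠ y j⁻, the averaged triplet loss attains its global minimum value 0 at x. -/

import Mathlib

/-- The triplet loss term with margin ε. -/
noncomputable def tripletLossTerm {E : Type*} [NormedAddCommGroup E] [InnerProductSpace ℝ E]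
    {ι : Type*} (ε : ℝ) (x : ι → E) (i jp jn : ι) : ℝ :=
  max (‖x i - x jp‖ ^ 2 - ‖x i - x jn‖ ^ 2 + ε) 0

/-- The averaged triplet loss over a finite set of triplets. -/
noncomputable def tripletLoss {E : Type*} [NormedAddCommGroup E] [InnerProductSpace ℝ E]
    {ι : Type*} (ε : ℝ) (T : Finset (ι × ι × ι)) (x : ι → E) : ℝ :=
  (1 / (T.card : ℝ)) * ∑ t ∈ T, tripletLossTerm ε x t.1 t.2.1 t.2.2

/-- For any integer labeling there is an embedding into a
nontrivial real inner product space with positive-pair distances at most ε⁺ and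
negative-pair distances at least ((ε⁺)² + ε)^{1/2}; it attains the global
minimum value 0 of the averaged triplet loss for every nonempty valid `T`. -/
theorem exists_triplet_feasible_embedding
    {E : Type*} [NormedAddCommGroup E] [InnerProductSpace ℝ E] [Nontrivial E]
    {ι : Type*} (y : ι → ℤ) (ε εp : ℝ) (hε : 0 < ε) (hεp : 0 ≤ εp) :
    ∃ x : ι → E,
      (∀ i j, y i = y j → ‖x i - x j‖ ≤ εp) ∧
      (∀ i j, y i ≠ y j → (εp ^ 2 + ε) ^ ((1 : ℝ) / 2) ≤ ‖x i - x j‖) ∧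
      (∀ T : Finset (ι × ι × ι), T.Nonempty →
        (∀ t ∈ T, y t.1 = y t.2.1 ∧ y t.1 ≠ y t.2.2) →
        tripletLoss ε T x = 0 ∧
        ∀ x' : ι → E, tripletLoss ε T x ≤ tripletLoss ε T x') := by
  obtain ⟨e, he⟩ := exists_norm_eq E (zero_le_one (α := ℝ))
  set R : ℝ := (εp ^ 2 + ε) ^ ((1 : ℝ) / 2) with hR
  have hpos : 0 ≤ εp ^ 2 + ε := by positivity
  have hR0 : 0 ≤ R := Real.rpow_nonneg hpos _
  have hR2 : R ^ 2 = εp ^ 2 + ε := by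
    rw [hR, ← Real.sqrt_eq_rpow, Real.sq_sqrt hpos]
  have hd : ∀ i j, ‖(R * (y i : ℝ)) • e - (R * (y j : ℝ)) • e‖ = R * |((y i - y j : ℤ) : ℝ)| := by
    intro i j
    rw [← sub_smul, norm_smul, he, mul_one, ← mul_sub, Real.norm_eq_abs, abs_mul,
      abs_of_nonneg hR0]
    push_cast
    rfl
  have h1 : ∀ i j, y i = y j → ‖(R * (y i : ℝ)) • e - (R * (y j : ℝ)) • e‖ ≤ εp := by
    intro i j h
    rw [hd, h]
    simpa using hεp
  have h2 : ∀ i j, y i ≠ y j → R ≤ ‖(R * (y i : ℝ)) • e - (R * (y j : ℝ)) • e‖ := by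
    intro i j h
    rw [hd]
    have h3 : (1 : ℤ) ≤ |y i - y j| := Int.one_le_abs (sub_ne_zero.mpr h)
    have h4 : (1 : ℝ) ≤ |((y i - y j : ℤ) : ℝ)| := by exact_mod_cast h3
    exact le_mul_of_one_le_right hR0 h4
  refine ⟨fun i => (R * (y i : ℝ)) • e, h1, h2, ?_⟩
  intro T _ hT
  have h0 : tripletLoss ε T (fun i => (R * (y i : ℝ)) • e) = 0 := by
    unfold tripletLoss
    rw [Finset.sum_eq_zero, mul_zero]
    intro t ht
    obtain ⟨ha, hb⟩ := hT t ht
    have ha' := pow_le_pow_left₀ (norm_nonneg _) (h1 _ _ ha) 2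
    have hb' := pow_le_pow_left₀ hR0 (h2 _ _ hb) 2
    unfold tripletLossTerm
    apply max_eq_right
    linarith
  refine ⟨h0, fun x' => ?_⟩
  rw [h0]
  unfold tripletLoss
  exact mul_nonneg (by positivity) (Finset.sum_nonneg fun t _ => le_max_right _ _)
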